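/- With σ_e² = 6.25, σ_d² = 0.25, σ_W² = 0.25, λ = 1.5, P = 0.5, and zero subjective means, define the quantizer encoder x(m) = √0.5·sgn(m) and the decoder ψ(y) = √(2/π)·0.5·tanh(√0.5·y/0.25) (which is the decoder's best response to the quantizer under its prior N(0, 0.25)). Then the integral of (m − ψ(√0.5·sgn(m) + w))² with respect to (gaussianReal 0 6.25) ⊗ (gaussianReal 0 0.25), plus 1.5·0.5, is strictly less than f(t) for every t ≥ 0, where f(t) = 0.25²·(6.25 − 0.25)/(0.25t + 0.25)² + 0.25·0.25/(0.25t + 0.25) + 1.5·6.25·t. -/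

import Mathlib

open MeasureTheory ProbabilityTheory

open scoped NNReal

/-- Exponential tilting turns a Gaussian whose mean equals its variance into a centred Gaussian,
so that odd functions integrate to zero against it. -/
lemma integral_exp_neg_mul_odd_gaussianReal {v : ℝ≥0} (hv : v ≠ 0) {g : ℝ → ℝ}
    (hg : ∀ x, g (-x) = -g x) :
    ∫ x, Real.exp (-x) * g x ∂(gaussianReal v v) = 0 := by
  have hv' : (v : ℝ) ≠ 0 := by exact_mod_cast hv
  rw [integral_gaussianReal_eq_integral_smul hv]
  set F : ℝ → ℝ := fun x => gaussianPDFReal v v x • (Real.exp (-x) * g x)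
  have key : ∀ x, gaussianPDFReal v v x * Real.exp (-x)
      = (Real.sqrt (2 * Real.pi * v))⁻¹ * Real.exp (-(x ^ 2 + v ^ 2) / (2 * v)) := by
    intro x
    rw [gaussianPDFReal, mul_assoc, ← Real.exp_add]
    congr 2
    field_simp
    ring
  have hF : ∀ x, F (-x) = -F x := by
    intro x
    simp only [F, smul_eq_mul, ← mul_assoc, key, hg, neg_sq, mul_neg]
  have h := integral_neg_eq_self F volume
  simp only [hF, integral_neg] at h
  linarith

lemma one_sub_exp_neg_le_tanh (x : ℝ) : 1 - Real.exp (-x) ≤ Real.tanh x := by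
  have hq := Real.exp_pos (-x)
  have hx : Real.exp x = (Real.exp (-x))⁻¹ := by rw [Real.exp_neg, inv_inv]
  rw [Real.tanh_eq, hx]
  set q := Real.exp (-x)
  rw [le_div_iff₀ (by positivity)]
  have : (q⁻¹ - q) - (1 - q) * (q⁻¹ + q) = (1 - q) ^ 2 := by
    field_simp
    ring
  nlinarith [sq_nonneg (1 - q)]

lemma continuous_real_tanh : Continuous Real.tanh := by
  simp only [funext Real.tanh_eq_sinh_div_cosh]
  exact Real.continuous_sinh.div Real.continuous_cosh fun x => (Real.cosh_pos x).ne'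

lemma integrable_tanh_pow (μ : Measure ℝ) [IsFiniteMeasure μ] (n : ℕ) :
    Integrable (fun x => Real.tanh x ^ n) μ := by
  refine Integrable.of_bound (continuous_real_tanh.pow n).aestronglyMeasurable 1
    (Filter.Eventually.of_forall fun x => ?_)
  rw [norm_pow]
  refine pow_le_one₀ (norm_nonneg _) ?_
  rw [Real.norm_eq_abs, abs_le]
  exact ⟨(Real.neg_one_lt_tanh x).le, (Real.tanh_lt_one x).le⟩

lemma one_sub_exp_le_integral_tanh_gaussianReal (v : ℝ≥0) :
    1 - Real.exp (-(v : ℝ) / 2) ≤ ∫ x, Real.tanh x ∂(gaussianReal v v) := by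
  have hi : Integrable (fun x => Real.exp (-x)) (gaussianReal v v) := by
    simpa using integrable_exp_mul_gaussianReal (μ := v) (v := v) (-1)
  have hm : ∫ x, Real.exp (-x) ∂(gaussianReal v v) = Real.exp (-(v : ℝ) / 2) := by
    have h := congrFun (mgf_id_gaussianReal (μ := v) (v := v)) (-1)
    simp only [mgf, id, neg_one_mul] at h
    rw [h]
    congr 1
    ring
  calc 1 - Real.exp (-(v : ℝ) / 2) = ∫ x, (1 - Real.exp (-x)) ∂(gaussianReal v v) := by
        rw [integral_sub (integrable_const _) hi, hm]
        simp
    _ ≤ _ := integral_mono ((integrable_const _).sub hi)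
        (by simpa using integrable_tanh_pow (gaussianReal v v) 1) one_sub_exp_neg_le_tanh

lemma integral_tanh_sq_gaussianReal {v : ℝ≥0} (hv : v ≠ 0) :
    ∫ x, Real.tanh x ^ 2 ∂(gaussianReal v v) = ∫ x, Real.tanh x ∂(gaussianReal v v) := by
  have h := integral_exp_neg_mul_odd_gaussianReal hv
    (g := fun x => Real.tanh x / Real.cosh x) fun x => by
      simp [Real.tanh_neg, Real.cosh_neg, neg_div]
  have hpt : ∀ x, Real.exp (-x) * (Real.tanh x / Real.cosh x)
      = Real.tanh x - Real.tanh x ^ 2 := by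
    intro x
    have hc := (Real.cosh_pos x).ne'
    rw [← Real.cosh_sub_sinh, Real.tanh_eq_sinh_div_cosh]
    field_simp
  simp only [hpt] at h
  rw [integral_sub (by simpa using integrable_tanh_pow (gaussianReal v v) 1)
    (integrable_tanh_pow _ 2)] at h
  linarith

lemma integral_abs_gaussianReal {v : ℝ≥0} (hv : v ≠ 0) :
    ∫ x, |x| ∂(gaussianReal 0 v) = Real.sqrt (2 * v / Real.pi) := by
  have hv' : (0 : ℝ) < v := by positivity
  rw [integral_gaussianReal_eq_integral_smul hv]
  have h1 : ∀ x : ℝ, gaussianPDFReal 0 v x • |x| = (Real.sqrt (2 * Real.pi * v))⁻¹ *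
      (fun y : ℝ => y * Real.exp (-(1 / (2 * v)) * y ^ 2)) |x| := by
    intro x
    simp only [gaussianPDFReal, smul_eq_mul, sub_zero, sq_abs]
    rw [show -x ^ 2 / (2 * (v : ℝ)) = -(1 / (2 * v)) * x ^ 2 by ring]
    ring
  rw [integral_congr_ae (Filter.Eventually.of_forall h1), integral_const_mul,
    integral_comp_abs (f := fun y : ℝ => y * Real.exp (-(1 / (2 * v)) * y ^ 2))]
  have h2 := integral_rpow_mul_exp_neg_mul_rpow (p := 2) (q := 1) (b := 1 / (2 * v))
    (by norm_num) (by norm_num) (by positivity)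
  norm_num [Real.rpow_neg_one] at h2
  norm_num
  rw [h2, eq_comm]
  have hs2 : Real.sqrt 2 ^ 2 = 2 := Real.sq_sqrt (by norm_num)
  have hsv : Real.sqrt v ^ 2 = v := Real.sq_sqrt hv'.le
  field_simp
  rw [hs2, hsv]

/-- Law of the decoder's normalised observation when the symbol `s = ±1` is sent with
amplitude `a` over Gaussian noise of variance `σ2`. -/
lemma gaussianReal_map_symbol {σ2 v : ℝ≥0} (hσ : σ2 ≠ 0) {a s : ℝ} (hs : s ^ 2 = 1)
    (hv : (v : ℝ) = a ^ 2 / σ2) :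
    (gaussianReal 0 σ2).map (fun w => s * (a * (a * s + w) / σ2)) = gaussianReal v v := by
  have hσ' : (σ2 : ℝ) ≠ 0 := by exact_mod_cast hσ
  have hfun : (fun w : ℝ => s * (a * (a * s + w) / σ2))
      = (fun x => (v : ℝ) + x) ∘ fun w => (s * a / σ2) * w := by
    funext w
    simp only [Function.comp, hv]
    linear_combination (a ^ 2 / σ2) * hs
  rw [hfun, ← Measure.map_map (by fun_prop) (by fun_prop), gaussianReal_map_const_mul,
    gaussianReal_map_const_add]
  congr 1
  · simp
  · ext
    push_cast
    rw [hv]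
    field_simp
    rw [hs, one_mul]

lemma integral_sq_sub_tanh_gaussianReal {σ2 v : ℝ≥0} (hσ : σ2 ≠ 0) (hv0 : v ≠ 0) {a s : ℝ}
    (hs : s = 1 ∨ s = -1) (hv : (v : ℝ) = a ^ 2 / σ2) (m c : ℝ) :
    ∫ w, (m - c * Real.tanh (a * (a * s + w) / σ2)) ^ 2 ∂(gaussianReal 0 σ2)
      = m ^ 2 - (2 * c * (s * m) - c ^ 2) * ∫ x, Real.tanh x ∂(gaussianReal v v) := by
  have hs2 : s ^ 2 = 1 := by rcases hs with rfl | rfl <;> norm_num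
  have htanh : ∀ u, Real.tanh u = s * Real.tanh (s * u) := by
    intro u
    rcases hs with rfl | rfl <;> simp [Real.tanh_neg]
  have hexp : ∀ x, (m - c * (s * Real.tanh x)) ^ 2
      = m ^ 2 - 2 * c * (s * m) * Real.tanh x + c ^ 2 * Real.tanh x ^ 2 := by
    intro x
    linear_combination c ^ 2 * Real.tanh x ^ 2 * hs2
  have hi1 : Integrable Real.tanh (gaussianReal v v) := by
    simpa using integrable_tanh_pow (gaussianReal v v) 1
  calc ∫ w, (m - c * Real.tanh (a * (a * s + w) / σ2)) ^ 2 ∂(gaussianReal 0 σ2)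
      = ∫ w, (fun x => (m - c * (s * Real.tanh x)) ^ 2) (s * (a * (a * s + w) / σ2))
          ∂(gaussianReal 0 σ2) := by
        refine integral_congr_ae (Filter.Eventually.of_forall fun w => ?_)
        simp only
        rw [htanh]
    _ = ∫ x, (m - c * (s * Real.tanh x)) ^ 2 ∂(gaussianReal v v) := by
        rw [← gaussianReal_map_symbol hσ hs2 hv, integral_map (by fun_prop)]
        have := continuous_real_tanh
        exact Continuous.aestronglyMeasurable (by fun_prop)
    _ = _ := by
        simp only [hexp]
        have hi2 : Integrable (fun x => m ^ 2 - 2 * c * (s * m) * Real.tanh x)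
            (gaussianReal v v) := (integrable_const _).sub (hi1.const_mul _)
        rw [integral_add hi2 ((integrable_tanh_pow _ 2).const_mul _),
          integral_sub (integrable_const _) (hi1.const_mul _), integral_const_mul,
          integral_const_mul, integral_tanh_sq_gaussianReal hv0]
        simp only [integral_const, probReal_univ, one_smul]
        ring

lemma integral_sq_gaussianReal (v : ℝ≥0) : ∫ x, x ^ 2 ∂(gaussianReal 0 v) = v := by
  have h := variance_fun_id_gaussianReal (μ := 0) (v := v)
  rwa [variance_of_integral_eq_zero (by fun_prop) integral_id_gaussianReal] at h

lemma integral_integral_quantizer_gaussianReal {τ2 σ2 v : ℝ≥0} (hτ : τ2 ≠ 0) (hσ : σ2 ≠ 0)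
    (hv0 : v ≠ 0) {a : ℝ} (hv : (v : ℝ) = a ^ 2 / σ2) (c : ℝ) :
    ∫ m, ∫ w, (m - c * Real.tanh (a * (a * Real.sign m + w) / σ2)) ^ 2
        ∂(gaussianReal 0 σ2) ∂(gaussianReal 0 τ2)
      = τ2 - (2 * c * Real.sqrt (2 * τ2 / Real.pi) - c ^ 2)
          * ∫ x, Real.tanh x ∂(gaussianReal v v) := by
  set T := ∫ x, Real.tanh x ∂(gaussianReal v v)
  have hne : ∀ᵐ m ∂(gaussianReal 0 τ2), m ≠ 0 := by
    have := nullSingletonClass_gaussianReal (μ := 0) hτ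
    exact Measure.ae_ne _ 0
  have hinner : (fun m => ∫ w, (m - c * Real.tanh (a * (a * Real.sign m + w) / σ2)) ^ 2
      ∂(gaussianReal 0 σ2)) =ᵐ[gaussianReal 0 τ2]
      fun m => m ^ 2 - 2 * c * T * |m| + c ^ 2 * T := by
    filter_upwards [hne] with m hm
    have hs : Real.sign m = 1 ∨ Real.sign m = -1 := by
      rcases hm.lt_or_gt with h | h
      · exact Or.inr (Real.sign_of_neg h)
      · exact Or.inl (Real.sign_of_pos h)
    have habs : Real.sign m * m = |m| := by
      rcases hm.lt_or_gt with h | h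
      · rw [Real.sign_of_neg h, abs_of_neg h]; ring
      · rw [Real.sign_of_pos h, abs_of_pos h]; ring
    rw [integral_sq_sub_tanh_gaussianReal hσ hv0 hs hv, habs]
    ring
  have h2 : Integrable (fun m : ℝ => m ^ 2) (gaussianReal 0 τ2) :=
    (memLp_id_gaussianReal 2).integrable_sq
  have h1 : Integrable (fun m : ℝ => |m|) (gaussianReal 0 τ2) :=
    ((memLp_id_gaussianReal 1).integrable le_rfl).abs
  have h3 : Integrable (fun m : ℝ => m ^ 2 - 2 * c * T * |m|) (gaussianReal 0 τ2) :=
    h2.sub (h1.const_mul _)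
  rw [integral_congr_ae hinner, integral_add h3 (integrable_const _),
    integral_sub h2 (h1.const_mul _), integral_const_mul, integral_abs_gaussianReal hτ,
    integral_sq_gaussianReal]
  simp only [integral_const, probReal_univ, one_smul]
  ring

lemma affine_cost_lower_bound {t : ℝ} (ht : 0 ≤ t) :
    (6.11 : ℝ) < 0.25 ^ 2 * (6.25 - 0.25) / (0.25 * t + 0.25) ^ 2
        + 0.25 * 0.25 / (0.25 * t + 0.25) + 1.5 * 6.25 * t := by
  have hu : 0 < 1 + t := by linarith
  have heq : 0.25 ^ 2 * (6.25 - 0.25) / (0.25 * t + 0.25) ^ 2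
        + 0.25 * 0.25 / (0.25 * t + 0.25) + 1.5 * 6.25 * t
      = (6 + 0.25 * (1 + t) + 9.375 * t * (1 + t) ^ 2) / (1 + t) ^ 2 := by
    rw [show 0.25 * t + 0.25 = 0.25 * (1 + t) by ring]
    field_simp
    ring
  rw [heq, lt_div_iff₀ (by positivity)]
  nlinarith [mul_nonneg ht (sq_nonneg (t - 0.094)), sq_nonneg (t - 0.094)]

lemma measurable_real_sign : Measurable Real.sign := by
  unfold Real.sign
  exact Measurable.ite measurableSet_Iio measurable_const
    (Measurable.ite measurableSet_Ioi measurable_const measurable_const)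

lemma integrable_quantizer_gaussianReal (τ2 σ2 : ℝ≥0) (a c : ℝ) :
    Integrable (fun p : ℝ × ℝ => (p.1 - c * Real.tanh (a * (a * Real.sign p.1 + p.2) / σ2)) ^ 2)
      ((gaussianReal 0 τ2).prod (gaussianReal 0 σ2)) := by
  have hm : Measurable fun p : ℝ × ℝ =>
      c * Real.tanh (a * (a * Real.sign p.1 + p.2) / σ2) := by
    have h1 := continuous_real_tanh.measurable
    have h2 := measurable_real_sign
    fun_prop
  have hb : MemLp (fun p : ℝ × ℝ => c * Real.tanh (a * (a * Real.sign p.1 + p.2) / σ2)) 2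
      ((gaussianReal 0 τ2).prod (gaussianReal 0 σ2)) := by
    refine MemLp.of_bound hm.aestronglyMeasurable |c| (Filter.Eventually.of_forall fun p => ?_)
    rw [norm_mul, Real.norm_eq_abs, Real.norm_eq_abs]
    refine mul_le_of_le_one_right (abs_nonneg c) (abs_le.2 ?_)
    exact ⟨(Real.neg_one_lt_tanh _).le, (Real.tanh_lt_one _).le⟩
  have hf : MemLp (fun p : ℝ × ℝ => p.1) 2
      ((gaussianReal 0 τ2).prod (gaussianReal 0 σ2)) :=
    (memLp_id_gaussianReal (μ := 0) (v := τ2) 2).comp_fst _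
  exact (hf.sub hb).integrable_sq

theorem stmt16 :
    let ψ : ℝ → ℝ := fun y =>
      Real.sqrt (2 / Real.pi) * 0.5 * Real.tanh (Real.sqrt 0.5 * y / 0.25)
    let ν : Measure (ℝ × ℝ) :=
      (gaussianReal 0 ⟨6.25, by norm_num⟩).prod (gaussianReal 0 ⟨0.25, by norm_num⟩)
    let f : ℝ → ℝ := fun t =>
      0.25 ^ 2 * (6.25 - 0.25) / (0.25 * t + 0.25) ^ 2
        + 0.25 * 0.25 / (0.25 * t + 0.25) + 1.5 * 6.25 * t
    ∀ t ≥ (0 : ℝ),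
      (∫ p, (p.1 - ψ (Real.sqrt 0.5 * Real.sign p.1 + p.2)) ^ 2 ∂ν) + 1.5 * 0.5
        < f t := by
  intro ψ ν f t ht
  refine lt_trans ?_ (affine_cost_lower_bound ht)
  set τ2 : ℝ≥0 := ⟨6.25, by norm_num⟩
  set σ2 : ℝ≥0 := ⟨0.25, by norm_num⟩
  have hτv : (τ2 : ℝ) = 6.25 := rfl
  have hσv : (σ2 : ℝ) = 0.25 := rfl
  have hτ : τ2 ≠ 0 := by
    rw [← NNReal.coe_ne_zero, hτv]; norm_num
  have hσ : σ2 ≠ 0 := by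
    rw [← NNReal.coe_ne_zero, hσv]; norm_num
  have hval := integral_integral_quantizer_gaussianReal (v := 2) hτ hσ two_ne_zero
    (a := Real.sqrt 0.5) (by rw [Real.sq_sqrt (by norm_num), hσv]; norm_num)
    (Real.sqrt (2 / Real.pi) * 0.5)
  have hT := one_sub_exp_le_integral_tanh_gaussianReal 2
  rw [← integral_prod _ (integrable_quantizer_gaussianReal τ2 σ2 _ _), hσv, hτv] at hval
  have hsqrt : Real.sqrt (2 * 6.25 / Real.pi) = 2.5 * Real.sqrt (2 / Real.pi) := by
    rw [show 2 * 6.25 / Real.pi = 2.5 ^ 2 * (2 / Real.pi) by ring,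
      Real.sqrt_mul (by norm_num), Real.sqrt_sq (by norm_num)]
  have hsq : Real.sqrt (2 / Real.pi) ^ 2 = 2 / Real.pi := Real.sq_sqrt (by positivity)
  have hcoef : 2 * (Real.sqrt (2 / Real.pi) * 0.5) * Real.sqrt (2 * 6.25 / Real.pi)
      - (Real.sqrt (2 / Real.pi) * 0.5) ^ 2 = 4.5 / Real.pi := by
    rw [hsqrt]
    linear_combination 2.25 * hsq
  rw [hcoef] at hval
  have hexp : Real.exp (-((2 : ℝ≥0) : ℝ) / 2) < 0.368 := by
    have h := Real.exp_one_gt_d9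
    rw [NNReal.coe_ofNat, show -(2 : ℝ) / 2 = -1 by norm_num, Real.exp_neg,
      inv_lt_comm₀ (Real.exp_pos 1) (by norm_num)]
    norm_num at h ⊢
    linarith
  have hpi : 1.432 < 4.5 / Real.pi := by
    rw [lt_div_iff₀ Real.pi_pos]
    nlinarith [Real.pi_lt_d4]
  change (∫ p, (p.1 - Real.sqrt (2 / Real.pi) * 0.5 *
    Real.tanh (Real.sqrt 0.5 * (Real.sqrt 0.5 * Real.sign p.1 + p.2) / 0.25)) ^ 2
      ∂((gaussianReal 0 τ2).prod (gaussianReal 0 σ2))) + 1.5 * 0.5 < 6.11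
  rw [hval]
  nlinarith
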